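/- arXiv:1912.05406 — 5 statements merged into one kernel-verified Lean document; each statement's English description precedes it below -/
import Mathlib

section
/- Let f : {-1,1}^n → {-1,1} be a Boolean function that depends on all n variables, i.e. for every i ∈ {1,…,n} there exists x with f(x^(i)) ≠ f(x), where x^(i) flips the sign of coordinate i. Then n ≤ deg(f) · 2^(deg(f)). -/
/-- The `±1` value of a bit: `true ↦ 1`, `false ↦ -1`. -/
noncomputable def sgnv (b : Bool) : ℝ := if b then 1 else -1

/-- The Fourier coefficient `f̂(S)` of a Boolean function `f : {-1,1}^n → {-1,1}`
(encoded via bits), i.e. `f̂(S) = 2^(-n) · Σ_x f(x) · ∏_{i ∈ S} x_i`. -/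
noncomputable def boolFourier {n : ℕ} (f : (Fin n → Bool) → Bool) (S : Finset (Fin n)) : ℝ :=
  (∑ x : Fin n → Bool, sgnv (f x) * ∏ i ∈ S, sgnv (x i)) / 2 ^ n

/-- The degree of a Boolean function `f : {-1,1}^n → {-1,1}`:
`deg f = max {|S| : f̂(S) ≠ 0}`, the degree of the unique multilinear real
polynomial representing `f`. -/
noncomputable def boolDeg {n : ℕ} (f : (Fin n → Bool) → Bool) : ℕ :=
  sSup {k : ℕ | ∃ S : Finset (Fin n), boolFourier f S ≠ 0 ∧ S.card = k}

/-- The influence `Inf_i(f)` of variable `i` on `f`: the probability over a uniformly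
random input `x` that flipping coordinate `i` changes the value of `f`. -/
noncomputable def influence {n : ℕ} (f : (Fin n → Bool) → Bool) (i : Fin n) : ℝ :=
  ((Finset.univ.filter fun x : Fin n → Bool =>
      f (Function.update x i (!x i)) ≠ f x).card : ℝ) / 2 ^ n

/-!
The total influence of `f` is `∑ S, |S| f̂(S)² ≤ deg f`, since `∑ S, f̂(S)² = 1`. Conversely each
influence is at least `2 ^ (-deg f)`: the function `x ↦ (f(x) - f(x^(i))) / 2` is nonzero, has
degree at most `deg f`, and a nonzero function `g` of degree `d` on the cube is nonzero on at least
a fraction `2 ^ (-d)` of it. Indeed, if `S` is maximal with `ĝ(S) ≠ 0`, then on every subcube with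
free coordinates `S` the top coefficient of the restriction of `g` is still `ĝ(S)`, so `g` does not
vanish identically there. Summing over the `n` variables gives `n · 2 ^ (-deg f) ≤ deg f`.
-/

open Finset

theorem sgnv_mul_self (b : Bool) : sgnv b * sgnv b = 1 := by
  cases b <;> simp [sgnv]

theorem sgnv_not (b : Bool) : sgnv (!b) = -sgnv b := by
  cases b <;> simp [sgnv]

theorem sgnv_injective : Function.Injective sgnv := by
  intro a b
  cases a <;> cases b <;> norm_num [sgnv]

section Walsh

variable {ι : Type*}

/-- The Walsh character (monomial) `χ_S(x) = ∏_{i ∈ S} x_i` on the cube, with bits read as signs. -/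
noncomputable def walsh (S : Finset ι) (x : ι → Bool) : ℝ := ∏ i ∈ S, sgnv (x i)

theorem walsh_mul_self (S : Finset ι) (x : ι → Bool) : walsh S x * walsh S x = 1 := by
  rw [walsh, ← prod_mul_distrib]
  exact prod_eq_one fun i _ => sgnv_mul_self (x i)

theorem sum_walsh_mul_walsh [Fintype ι] (x y : ι → Bool) :
    ∑ S : Finset ι, walsh S x * walsh S y = if x = y then 2 ^ Fintype.card ι else 0 := by
  have sum_eq_prod :
      ∑ S : Finset ι, walsh S x * walsh S y = ∏ i, (1 + sgnv (x i) * sgnv (y i)) := by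
    simp_rw [prod_one_add, powerset_univ, walsh, prod_mul_distrib]
  rw [sum_eq_prod]
  split_ifs with hxy
  · simp only [hxy, sgnv_mul_self, one_add_one_eq_two, prod_const, card_univ]
  · obtain ⟨i, hi⟩ := Function.ne_iff.mp hxy
    refine prod_eq_zero (mem_univ i) ?_
    rw [Bool.eq_not.mpr hi, sgnv_not, neg_mul, sgnv_mul_self, add_neg_cancel]

variable [DecidableEq ι]

/-- The point `x^(i)` obtained from `x` by flipping the coordinate `i`. -/
def flipAt (i : ι) (x : ι → Bool) : ι → Bool := Function.update x i (!x i)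

theorem flipAt_self (i : ι) (x : ι → Bool) : flipAt i x i = !x i :=
  Function.update_self ..

theorem flipAt_of_ne {i j : ι} (h : j ≠ i) (x : ι → Bool) : flipAt i x j = x j :=
  Function.update_of_ne h ..

theorem flipAt_involutive (i : ι) : Function.Involutive (flipAt i) := fun x => by
  simp [flipAt]

theorem flipAt_ne (i : ι) (x : ι → Bool) : flipAt i x ≠ x := fun h => by
  simpa [flipAt_self] using congrFun h i

theorem walsh_flipAt_of_notMem {S : Finset ι} {i : ι} (hi : i ∉ S) (x : ι → Bool) :
    walsh S (flipAt i x) = walsh S x :=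
  prod_congr rfl fun _ hj => by rw [flipAt_of_ne (ne_of_mem_of_not_mem hj hi)]

theorem walsh_flipAt_of_mem {S : Finset ι} {i : ι} (hi : i ∈ S) (x : ι → Bool) :
    walsh S (flipAt i x) = -walsh S x := by
  have walsh_eq (y : ι → Bool) : walsh S y = sgnv (y i) * walsh (S.erase i) y :=
    (mul_prod_erase S (fun j => sgnv (y j)) hi).symm
  rw [walsh_eq, walsh_eq, walsh_flipAt_of_notMem (notMem_erase i S), flipAt_self, sgnv_not, neg_mul]

theorem sum_eq_zero_of_flipAt_eq_neg {M : Type*} [AddCommGroup M] {i : ι}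
    {A : Finset (ι → Bool)} {g : (ι → Bool) → M} (hA : ∀ x ∈ A, flipAt i x ∈ A)
    (hg : ∀ x ∈ A, g (flipAt i x) = -g x) : ∑ x ∈ A, g x = 0 :=
  sum_involution (fun x _ => flipAt i x) (fun x hx => by rw [hg x hx, add_neg_cancel])
    (fun x _ _ => flipAt_ne i x) hA (fun x _ => flipAt_involutive i x)

variable [Fintype ι]

/-- The Fourier coefficient `ĝ(S)` of a real function on the cube; `boolFourier f` is the case
`g = sgnv ∘ f`. -/
noncomputable def walshCoeff (g : (ι → Bool) → ℝ) (S : Finset ι) : ℝ :=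
  (∑ x, g x * walsh S x) / 2 ^ Fintype.card ι

theorem sum_mul_walsh (g : (ι → Bool) → ℝ) (S : Finset ι) :
    ∑ x, g x * walsh S x = 2 ^ Fintype.card ι * walshCoeff g S := by
  rw [walshCoeff, mul_div_cancel₀ _ (by positivity)]

theorem sum_walshCoeff_mul_walsh (g : (ι → Bool) → ℝ) (x : ι → Bool) :
    ∑ S, walshCoeff g S * walsh S x = g x := by
  calc ∑ S, walshCoeff g S * walsh S x
      = ∑ S, ∑ y, g y / 2 ^ Fintype.card ι * (walsh S y * walsh S x) := by
        refine sum_congr rfl fun S _ => ?_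
        rw [walshCoeff, sum_div, sum_mul]
        exact sum_congr rfl fun y _ => by ring
    _ = ∑ y, g y / 2 ^ Fintype.card ι * ∑ S, walsh S y * walsh S x := by
        simp_rw [mul_sum]
        exact sum_comm
    _ = g x := by simp [sum_walsh_mul_walsh]

theorem sum_sq_eq_sum_walshCoeff_sq (g : (ι → Bool) → ℝ) :
    ∑ x, g x ^ 2 = 2 ^ Fintype.card ι * ∑ S, walshCoeff g S ^ 2 := by
  calc ∑ x, g x ^ 2 = ∑ x, g x * ∑ S, walshCoeff g S * walsh S x := by
        simp_rw [sum_walshCoeff_mul_walsh, sq]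
    _ = ∑ S, walshCoeff g S * ∑ x, g x * walsh S x := by
        simp_rw [mul_sum]
        rw [sum_comm]
        exact sum_congr rfl fun S _ => sum_congr rfl fun x _ => mul_left_comm ..
    _ = 2 ^ Fintype.card ι * ∑ S, walshCoeff g S ^ 2 := by
        rw [mul_sum]
        exact sum_congr rfl fun S _ => by rw [sum_mul_walsh]; ring

theorem exists_walshCoeff_ne_zero {g : (ι → Bool) → ℝ} (hg : g ≠ 0) : ∃ S, walshCoeff g S ≠ 0 := by
  by_contra! hzero
  exact hg <| funext fun x => by simp [← sum_walshCoeff_mul_walsh g x, hzero]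

/-- The Fourier degree `max {|S| : ĝ(S) ≠ 0}` of a real function on the cube, equal to `0` for
`g = 0`; `boolDeg f` is the case `g = sgnv ∘ f`. -/
noncomputable def walshDegree (g : (ι → Bool) → ℝ) : ℕ :=
  sSup {k : ℕ | ∃ S : Finset ι, walshCoeff g S ≠ 0 ∧ #S = k}

theorem card_le_walshDegree {g : (ι → Bool) → ℝ} {S : Finset ι} (hS : walshCoeff g S ≠ 0) :
    #S ≤ walshDegree g := by
  refine le_csSup ⟨Fintype.card ι, ?_⟩ ⟨S, hS, rfl⟩
  rintro _ ⟨T, -, rfl⟩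
  exact card_le_univ T

theorem walshDegree_le {g : (ι → Bool) → ℝ} {d : ℕ} (h : ∀ S, walshCoeff g S ≠ 0 → #S ≤ d) :
    walshDegree g ≤ d := by
  refine csSup_le' ?_
  rintro _ ⟨S, hS, rfl⟩
  exact h S hS

end Walsh

section Support

variable {ι : Type*} [Fintype ι] [DecidableEq ι] {g : (ι → Bool) → ℝ} {S : Finset ι}

/-- The subcube through `x` whose free coordinates are those in `S`. -/
def subcube (S : Finset ι) (x : ι → Bool) : Finset (ι → Bool) := {y | ∀ j ∉ S, y j = x j}

theorem mem_subcube {x y : ι → Bool} : y ∈ subcube S x ↔ ∀ j ∉ S, y j = x j := by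
  simp [subcube]

theorem flipAt_mem_subcube {x y : ι → Bool} {i : ι} (hi : i ∈ S) (hy : y ∈ subcube S x) :
    flipAt i y ∈ subcube S x :=
  mem_subcube.mpr fun j hj => by
    rw [flipAt_of_ne (ne_of_mem_of_not_mem hi hj).symm, mem_subcube.mp hy j hj]

theorem sum_subcube_walsh_mul_walsh_eq_zero {T : Finset ι} (hST : ¬S ⊆ T) (x : ι → Bool) :
    ∑ y ∈ subcube S x, walsh T y * walsh S y = 0 := by
  obtain ⟨i, hiS, hiT⟩ := not_subset.mp hST
  refine sum_eq_zero_of_flipAt_eq_neg (fun y => flipAt_mem_subcube hiS) fun y _ => ?_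
  rw [walsh_flipAt_of_notMem hiT, walsh_flipAt_of_mem hiS, mul_neg]

theorem sum_subcube_mul_walsh_of_maximal (hS : Maximal (walshCoeff g · ≠ 0) S) (x : ι → Bool) :
    ∑ y ∈ subcube S x, g y * walsh S y = #(subcube S x) * walshCoeff g S := by
  have term_eq_zero (T : Finset ι) (hTS : T ≠ S) :
      walshCoeff g T * ∑ y ∈ subcube S x, walsh T y * walsh S y = 0 := by
    by_cases hST : S ⊆ T
    · have hT : walshCoeff g T = 0 := by
        by_contra hT
        exact hTS (hS.eq_of_le hT hST).symm
      rw [hT, zero_mul]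
    · rw [sum_subcube_walsh_mul_walsh_eq_zero hST, mul_zero]
  calc ∑ y ∈ subcube S x, g y * walsh S y
      = ∑ y ∈ subcube S x, (∑ T, walshCoeff g T * walsh T y) * walsh S y := by
        simp_rw [sum_walshCoeff_mul_walsh]
    _ = ∑ T, walshCoeff g T * ∑ y ∈ subcube S x, walsh T y * walsh S y := by
        simp_rw [sum_mul, mul_sum, mul_assoc]
        exact sum_comm
    _ = walshCoeff g S * ∑ y ∈ subcube S x, walsh S y * walsh S y :=
        Fintype.sum_eq_single S term_eq_zero
    _ = #(subcube S x) * walshCoeff g S := by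
        simp_rw [walsh_mul_self, sum_const, nsmul_one, mul_comm]

theorem exists_mem_subcube_ne_zero_of_maximal (hS : Maximal (walshCoeff g · ≠ 0) S)
    (x : ι → Bool) : ∃ y ∈ subcube S x, g y ≠ 0 := by
  have subcube_card_ne_zero : (#(subcube S x) : ℝ) ≠ 0 :=
    Nat.cast_ne_zero.mpr (card_ne_zero_of_mem (mem_subcube.mpr fun _ _ => rfl : x ∈ subcube S x))
  have sum_ne_zero : ∑ y ∈ subcube S x, g y * walsh S y ≠ 0 := by
    rw [sum_subcube_mul_walsh_of_maximal hS]
    exact mul_ne_zero subcube_card_ne_zero hS.prop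
  obtain ⟨y, hy, hgy⟩ := exists_ne_zero_of_sum_ne_zero sum_ne_zero
  exact ⟨y, hy, left_ne_zero_of_mul hgy⟩

theorem two_pow_card_compl_le_card_support (hS : Maximal (walshCoeff g · ≠ 0) S) :
    2 ^ #Sᶜ ≤ #{x | g x ≠ 0} := by
  have restrict_surjOn : Set.SurjOn (Sᶜ.restrict (π := fun _ => Bool))
      ({x | g x ≠ 0} : Finset (ι → Bool)) (univ : Finset (↥Sᶜ → Bool)) := by
    intro z _
    obtain ⟨x, rfl⟩ := Subtype.surjective_restrict (β := fun _ => Bool) (· ∈ Sᶜ) z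
    obtain ⟨y, hy, hgy⟩ := exists_mem_subcube_ne_zero_of_maximal hS x
    refine ⟨y, by simpa using hgy, funext fun j => ?_⟩
    exact mem_subcube.mp hy j (mem_compl.mp j.2)
  simpa only [card_univ, Fintype.card_fun, Fintype.card_bool, Fintype.card_coe]
    using card_le_card_of_surjOn _ restrict_surjOn

theorem two_pow_card_le_card_support_mul (hg : g ≠ 0) :
    2 ^ Fintype.card ι ≤ #{x | g x ≠ 0} * 2 ^ walshDegree g := by
  obtain ⟨S, hS⟩ := Set.Finite.exists_maximal (Set.toFinite {S | walshCoeff g S ≠ 0})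
    (exists_walshCoeff_ne_zero hg)
  calc 2 ^ Fintype.card ι = 2 ^ #Sᶜ * 2 ^ #S := by rw [← pow_add, card_compl_add_card]
    _ ≤ #{x | g x ≠ 0} * 2 ^ walshDegree g :=
        Nat.mul_le_mul (two_pow_card_compl_le_card_support hS)
          (Nat.pow_le_pow_right two_pos (card_le_walshDegree hS.prop))

end Support

section CoordLaplacian

variable {ι : Type*} [DecidableEq ι]

/-- The `i`-th coordinate Laplacian `x ↦ (g(x) - g(x^(i))) / 2`, the part of `g` that depends on
the variable `i`. -/
noncomputable def coordLaplacian (i : ι) (g : (ι → Bool) → ℝ) (x : ι → Bool) : ℝ :=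
  (g x - g (flipAt i x)) / 2

variable [Fintype ι]

theorem walshCoeff_coordLaplacian (i : ι) (g : (ι → Bool) → ℝ) (S : Finset ι) :
    walshCoeff (coordLaplacian i g) S = if i ∈ S then walshCoeff g S else 0 := by
  have sum_flip : ∑ x, g (flipAt i x) * walsh S x = ∑ x, g x * walsh S (flipAt i x) := by
    rw [← (flipAt_involutive i).bijective.sum_comp fun x => g x * walsh S (flipAt i x)]
    simp_rw [flipAt_involutive i _]
  have sum_coordLaplacian : ∑ x, coordLaplacian i g x * walsh S x =
      (∑ x, g x * walsh S x - ∑ x, g x * walsh S (flipAt i x)) / 2 := by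
    rw [← sum_flip, ← sum_sub_distrib, sum_div]
    exact sum_congr rfl fun x _ => by rw [coordLaplacian]; ring
  rw [walshCoeff, sum_coordLaplacian, walshCoeff]
  split_ifs with hi
  · simp_rw [walsh_flipAt_of_mem hi, mul_neg, sum_neg_distrib, sub_neg_eq_add, add_self_div_two]
  · simp_rw [walsh_flipAt_of_notMem hi, sub_self, zero_div]

theorem walshDegree_coordLaplacian_le (i : ι) (g : (ι → Bool) → ℝ) :
    walshDegree (coordLaplacian i g) ≤ walshDegree g := by
  refine walshDegree_le fun S hS => card_le_walshDegree fun hzero => hS ?_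
  rw [walshCoeff_coordLaplacian, hzero, ite_self]

theorem sum_sum_coordLaplacian_sq (g : (ι → Bool) → ℝ) :
    ∑ i, ∑ x, coordLaplacian i g x ^ 2 =
      2 ^ Fintype.card ι * ∑ S, #S * walshCoeff g S ^ 2 := by
  simp_rw [sum_sq_eq_sum_walshCoeff_sq, walshCoeff_coordLaplacian, ← mul_sum]
  rw [sum_comm]
  simp [ite_pow]

theorem sum_sum_coordLaplacian_sq_le (g : (ι → Bool) → ℝ) :
    ∑ i, ∑ x, coordLaplacian i g x ^ 2 ≤ walshDegree g * ∑ x, g x ^ 2 := by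
  rw [sum_sum_coordLaplacian_sq, sum_sq_eq_sum_walshCoeff_sq, mul_left_comm]
  refine mul_le_mul_of_nonneg_left ?_ (by positivity)
  rw [mul_sum]
  refine sum_le_sum fun S _ => ?_
  by_cases hS : walshCoeff g S = 0
  · simp [hS]
  · gcongr
    exact card_le_walshDegree hS

end CoordLaplacian

section BooleanFunction

variable {ι : Type*} [DecidableEq ι]

theorem coordLaplacian_sgnv_ne_zero_iff {f : (ι → Bool) → Bool} {i : ι} {x : ι → Bool} :
    coordLaplacian i (sgnv ∘ f) x ≠ 0 ↔ f (flipAt i x) ≠ f x := by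
  simp [coordLaplacian, sub_eq_zero, sgnv_injective.eq_iff, eq_comm (a := f x)]

theorem coordLaplacian_sgnv_sq (f : (ι → Bool) → Bool) (i : ι) (x : ι → Bool) :
    coordLaplacian i (sgnv ∘ f) x ^ 2 = if f (flipAt i x) ≠ f x then 1 else 0 := by
  rw [coordLaplacian, Function.comp_apply, Function.comp_apply]
  cases f x <;> cases f (flipAt i x) <;> norm_num [sgnv]

variable [Fintype ι]

theorem sum_card_sensitive_le (f : (ι → Bool) → Bool) :
    ∑ i, #{x | f (flipAt i x) ≠ f x} ≤ walshDegree (sgnv ∘ f) * 2 ^ Fintype.card ι := by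
  have sum_sq_le := sum_sum_coordLaplacian_sq_le (sgnv ∘ f)
  simp_rw [coordLaplacian_sgnv_sq, sum_boole, Function.comp_apply, sq, sgnv_mul_self] at sum_sq_le
  simp only [sum_const, card_univ, Fintype.card_fun, Fintype.card_bool, nsmul_one,
    Nat.cast_pow, Nat.cast_ofNat] at sum_sq_le
  exact_mod_cast sum_sq_le

theorem two_pow_card_le_card_sensitive_mul {f : (ι → Bool) → Bool} {i : ι}
    (hi : ∃ x, f (flipAt i x) ≠ f x) :
    2 ^ Fintype.card ι ≤ #{x | f (flipAt i x) ≠ f x} * 2 ^ walshDegree (sgnv ∘ f) := by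
  obtain ⟨x, hx⟩ := hi
  have laplacian_ne_zero : coordLaplacian i (sgnv ∘ f) ≠ 0 :=
    Function.ne_iff.mpr ⟨x, coordLaplacian_sgnv_ne_zero_iff.mpr hx⟩
  calc 2 ^ Fintype.card ι
      ≤ #{x | coordLaplacian i (sgnv ∘ f) x ≠ 0} * 2 ^ walshDegree (coordLaplacian i (sgnv ∘ f)) :=
        two_pow_card_le_card_support_mul laplacian_ne_zero
    _ ≤ #{x | f (flipAt i x) ≠ f x} * 2 ^ walshDegree (sgnv ∘ f) := by
        simp_rw [coordLaplacian_sgnv_ne_zero_iff]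
        gcongr
        · exact one_le_two
        · exact walshDegree_coordLaplacian_le i _

end BooleanFunction

theorem n_le_degree_mul_two_pow_degree_general {ι : Type*} [Fintype ι] [DecidableEq ι]
    (f : (ι → Bool) → Bool) (hdep : ∀ i, ∃ x, f (flipAt i x) ≠ f x) :
    Fintype.card ι ≤ walshDegree (sgnv ∘ f) * 2 ^ walshDegree (sgnv ∘ f) := by
  set d := walshDegree (sgnv ∘ f)
  refine Nat.le_of_mul_le_mul_right ?_ (Nat.two_pow_pos (Fintype.card ι))
  calc Fintype.card ι * 2 ^ Fintype.card ι = ∑ _i : ι, 2 ^ Fintype.card ι := by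
        rw [sum_const, card_univ, smul_eq_mul]
    _ ≤ ∑ i, #{x | f (flipAt i x) ≠ f x} * 2 ^ d :=
        sum_le_sum fun i _ => two_pow_card_le_card_sensitive_mul (hdep i)
    _ = (∑ i, #{x | f (flipAt i x) ≠ f x}) * 2 ^ d := (sum_mul ..).symm
    _ ≤ d * 2 ^ Fintype.card ι * 2 ^ d := Nat.mul_le_mul_right _ (sum_card_sensitive_le f)
    _ = d * 2 ^ d * 2 ^ Fintype.card ι := mul_right_comm ..

theorem boolFourier_eq_walshCoeff {n : ℕ} (f : (Fin n → Bool) → Bool) (S : Finset (Fin n)) :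
    boolFourier f S = walshCoeff (sgnv ∘ f) S := by
  simp [boolFourier, walshCoeff, walsh]

theorem boolDeg_eq_walshDegree {n : ℕ} (f : (Fin n → Bool) → Bool) :
    boolDeg f = walshDegree (sgnv ∘ f) := by
  simp_rw [boolDeg, walshDegree, boolFourier_eq_walshCoeff]

/-- Nisan–Szegedy: if a Boolean function `f : {-1,1}^n → {-1,1}` depends on all `n`
variables, then `n ≤ deg(f) · 2^(deg f)` (hence `deg f ≥ log₂ n − O(log log n)`). -/
theorem n_le_degree_mul_two_pow_degree (n : ℕ) (f : (Fin n → Bool) → Bool)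
    (hdep : ∀ i : Fin n, ∃ x : Fin n → Bool, f (Function.update x i (!x i)) ≠ f x) :
    n ≤ boolDeg f * 2 ^ boolDeg f := by
  rw [boolDeg_eq_walshDegree]
  simpa only [Fintype.card_fin] using n_le_degree_mul_two_pow_degree_general f hdep
end

section
/- Let p ∈ ℝ[x₁,…,xₙ] be a polynomial. Then there exists a univariate polynomial q ∈ ℝ[z] with deg(q) ≤ deg(p) such that for all x = (x₁,…,xₙ) ∈ {0,1}^n, (1/n!)·Σ_{σ ∈ S_n} p(x_{σ(1)},…,x_{σ(n)}) = q(x₁ + ⋯ + xₙ), where S_n is the symmetric group on {1,…,n}. -/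
/-- The real value of a bit: `true ↦ 1`, `false ↦ 0`. -/
def bval (b : Bool) : ℝ := if b then 1 else 0

/-!
On idempotents `y i` every monomial reduces to a squarefree one `∏ i ∈ S, y i`. Summing it over
all permutations counts each injection `S ↪ ι` exactly `(n - #S)!` times, and the sum of
`∏ i, y (f i)` over the injections `f` is the falling factorial `s (s - 1) ⋯ (s - #S + 1)` of
`s = ∑ i, y i`: a further value `y a` with `a ∉ range f` can be chosen in `s - #S` ways, because
multiplying `∏ i, y (f i)` by any of its factors does not change it.
-/

open Finset Polynomial
open scoped Nat

lemma natDegree_descPochhammer_le (R : Type*) [Ring R] (k : ℕ) :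
    (descPochhammer R k).natDegree ≤ k := by
  rw [← descPochhammer_map (Int.castRingHom R)]
  exact natDegree_map_le.trans (descPochhammer_natDegree ℤ k).le

lemma finsupp_card_support_le_sum {ι : Type*} (d : ι →₀ ℕ) : #d.support ≤ d.sum fun _ e => e := by
  rw [card_eq_sum_ones]
  exact sum_le_sum fun i hi => Nat.one_le_iff_ne_zero.mpr (Finsupp.mem_support_iff.mp hi)

section PermutationsExtendingEmbedding

variable {ι κ : Type*} [Fintype ι] [DecidableEq ι] [Fintype κ]

lemma card_perm_embedding_trans_eq (e f : κ ↪ ι) :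
    Fintype.card {σ : Equiv.Perm ι // e.trans σ.toEmbedding = f} =
      (Fintype.card ι - Fintype.card κ)! := by
  classical
  have card_compl_range (g : κ ↪ ι) :
      Fintype.card ↥(Set.range g)ᶜ = Fintype.card ι - Fintype.card κ := by
    rw [Fintype.card_compl_set, Set.card_range_of_injective g.injective]
  let rangeEquiv : Set.range e ≃ Set.range f := e.toEquivRange.symm.trans f.toEquivRange
  have extends_iff (σ : Equiv.Perm ι) :
      e.trans σ.toEmbedding = f ↔ ∀ a : Set.range e, σ a = rangeEquiv a := by
    rw [DFunLike.ext_iff, ← e.toEquivRange.forall_congr_right]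
    simp [rangeEquiv]
  let complEquiv : ↥(Set.range e)ᶜ ≃ ↥(Set.range f)ᶜ :=
    Fintype.equivOfCardEq ((card_compl_range e).trans (card_compl_range f).symm)
  rw [Fintype.card_congr ((Equiv.subtypeEquivRight extends_iff).trans (Equiv.Set.compl rangeEquiv)),
    Fintype.card_equiv complEquiv, card_compl_range]

lemma sum_perm_embedding_trans {M : Type*} [AddCommMonoid M] (e : κ ↪ ι) (g : (κ ↪ ι) → M) :
    ∑ σ : Equiv.Perm ι, g (e.trans σ.toEmbedding) =
      (Fintype.card ι - Fintype.card κ)! • ∑ f, g f := by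
  rw [← Fintype.sum_fiberwise' (fun σ : Equiv.Perm ι => e.trans σ.toEmbedding) g, smul_sum]
  refine sum_congr rfl fun f _ => ?_
  rw [sum_const, card_univ, card_perm_embedding_trans_eq]

end PermutationsExtendingEmbedding

section IdempotentsSemiring

variable {ι A : Type*} [CommSemiring A] {y : ι → A}

lemma sum_mul_prod_of_isIdempotentElem {s : Finset ι} (hy : ∀ i ∈ s, IsIdempotentElem (y i)) :
    (∑ i ∈ s, y i) * ∏ i ∈ s, y i = #s * ∏ i ∈ s, y i := by
  classical
  rw [sum_mul, ← nsmul_eq_mul, ← sum_const]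
  refine sum_congr rfl fun i hi => ?_
  rw [← mul_prod_erase s y hi, ← mul_assoc, (hy i hi).eq]

lemma aeval_eq_sum_prod_support_of_isIdempotentElem {R : Type*} [CommSemiring R] [Algebra R A]
    (hy : ∀ i, IsIdempotentElem (y i)) (p : MvPolynomial ι R) :
    MvPolynomial.aeval y p =
      ∑ d ∈ p.support, algebraMap R A (p.coeff d) * ∏ i ∈ d.support, y i := by
  rw [MvPolynomial.aeval_def, MvPolynomial.eval₂_eq]
  refine sum_congr rfl fun d _ => ?_
  congr 1
  exact prod_congr rfl fun i hi => (hy i).pow_eq (Finsupp.mem_support_iff.mp hi)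

end IdempotentsSemiring

section IdempotentsRing

variable {ι A : Type*} [Fintype ι] [CommRing A] {y : ι → A}

lemma sum_notMem_range_mul_prod_of_isIdempotentElem [DecidableEq ι] {κ : Type*} [Fintype κ]
    (f : κ ↪ ι) (hy : ∀ j, IsIdempotentElem (y (f j))) :
    (∑ a : {a // a ∉ Set.range f}, y a) * ∏ j, y (f j) =
      (∑ i, y i - Fintype.card κ) * ∏ j, y (f j) := by
  have sum_range : ∑ a : {a // a ∈ Set.range f}, y a = ∑ j, y (f j) :=
    (Fintype.sum_equiv f.toEquivRange _ _ fun _ => rfl).symm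
  have sum_split : ∑ j, y (f j) + ∑ a : {a // a ∉ Set.range f}, y a = ∑ i, y i := by
    rw [← sum_range]
    convert Fintype.sum_subtype_add_sum_subtype (· ∈ Set.range f) y
  have absorb : (∑ j, y (f j)) * ∏ j, y (f j) = Fintype.card κ * ∏ j, y (f j) :=
    sum_mul_prod_of_isIdempotentElem fun j _ => hy j
  rw [← sum_split]
  linear_combination -absorb

lemma sum_fin_embedding_prod_eq_descPochhammer_eval (hy : ∀ i, IsIdempotentElem (y i)) (k : ℕ) :
    ∑ f : Fin k ↪ ι, ∏ i, y (f i) = (descPochhammer A k).eval (∑ i, y i) := by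
  classical
  induction k with
  | zero => simp
  | succ k ih =>
    calc ∑ f : Fin (k + 1) ↪ ι, ∏ i, y (f i)
        = ∑ f : Fin k ↪ ι, (∑ a : {a // a ∉ Set.range f}, y a) * ∏ i, y (f i) := by
          rw [← Equiv.sum_comp (Equiv.embeddingFinSucc k ι).symm, Fintype.sum_sigma]
          simp only [Equiv.coe_embeddingFinSucc_symm, Fin.prod_univ_succ, Fin.cons_zero,
            Fin.cons_succ, sum_mul]
      _ = ∑ f : Fin k ↪ ι, (∑ i, y i - k) * ∏ i, y (f i) :=
          sum_congr rfl fun f _ => by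
            rw [sum_notMem_range_mul_prod_of_isIdempotentElem f fun i => hy (f i), Fintype.card_fin]
      _ = (descPochhammer A (k + 1)).eval (∑ i, y i) := by
          rw [← mul_sum, ih, descPochhammer_succ_eval, mul_comm]

lemma sum_embedding_prod_eq_descPochhammer_eval {κ : Type*} [Fintype κ]
    (hy : ∀ i, IsIdempotentElem (y i)) :
    ∑ f : κ ↪ ι, ∏ j, y (f j) = (descPochhammer A (Fintype.card κ)).eval (∑ i, y i) := by
  rw [← sum_fin_embedding_prod_eq_descPochhammer_eval hy,
    ← Equiv.sum_comp ((Fintype.equivFin κ).embeddingCongr (Equiv.refl ι))]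
  refine sum_congr rfl fun f _ => ?_
  rw [← Equiv.prod_comp (Fintype.equivFin κ)]
  simp

lemma sum_perm_prod_eq_descPochhammer_eval [DecidableEq ι] (hy : ∀ i, IsIdempotentElem (y i))
    (S : Finset ι) :
    ∑ σ : Equiv.Perm ι, ∏ i ∈ S, y (σ i) =
      (Fintype.card ι - #S)! * (descPochhammer A #S).eval (∑ i, y i) := by
  have h := sum_perm_embedding_trans (Function.Embedding.subtype (· ∈ S)) fun f => ∏ i, y (f i)
  rw [sum_embedding_prod_eq_descPochhammer_eval hy, nsmul_eq_mul, Fintype.card_coe] at h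
  rw [← h]
  exact sum_congr rfl fun σ _ => (prod_coe_sort S fun i => y (σ i)).symm

end IdempotentsRing

theorem symmetrization_univariate_general {ι R : Type*} [Fintype ι] [DecidableEq ι] [CommRing R]
    (p : MvPolynomial ι R) :
    ∃ q : R[X], q.natDegree ≤ p.totalDegree ∧
      ∀ {A : Type*} [CommRing A] [Algebra R A] (y : ι → A), (∀ i, IsIdempotentElem (y i)) →
        ∑ σ : Equiv.Perm ι, MvPolynomial.aeval (fun i => y (σ i)) p = aeval (∑ i, y i) q := by
  refine ⟨∑ d ∈ p.support, C (p.coeff d * (Fintype.card ι - #d.support)!) *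
    descPochhammer R #d.support, ?_, fun {A} _ _ y hy => ?_⟩
  · refine natDegree_sum_le_of_forall_le _ _ fun d hd => ?_
    calc _ ≤ (descPochhammer R #d.support).natDegree := natDegree_C_mul_le _ _
      _ ≤ #d.support := natDegree_descPochhammer_le R _
      _ ≤ d.sum fun _ e => e := finsupp_card_support_le_sum d
      _ ≤ p.totalDegree := MvPolynomial.le_totalDegree hd
  · have aeval_descPochhammer (k : ℕ) :
        aeval (∑ i, y i) (descPochhammer R k) = (descPochhammer A k).eval (∑ i, y i) := by
      rw [← descPochhammer_map (algebraMap R A), eval_map_algebraMap]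
    simp only [aeval_eq_sum_prod_support_of_isIdempotentElem fun _ => hy _, map_sum, map_mul,
      aeval_C, aeval_descPochhammer, map_natCast]
    rw [sum_comm]
    simp only [← mul_sum, sum_perm_prod_eq_descPochhammer_eval hy, mul_assoc]

lemma isIdempotentElem_bval (b : Bool) : IsIdempotentElem (bval b) := by
  cases b <;> simp [bval, IsIdempotentElem]

/-- Symmetrization: for any real polynomial `p` in `n` variables, there is a univariate
polynomial `q` with `deg q ≤ deg p` such that for all `x ∈ {0,1}^n`,
`(1/n!)·Σ_{σ ∈ Sₙ} p(x_{σ(1)}, …, x_{σ(n)}) = q(x₁ + ⋯ + xₙ)`. -/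
theorem symmetrization_univariate (n : ℕ) (p : MvPolynomial (Fin n) ℝ) :
    ∃ q : Polynomial ℝ, q.natDegree ≤ p.totalDegree ∧
      ∀ x : Fin n → Bool,
        (∑ σ : Equiv.Perm (Fin n),
            MvPolynomial.eval (fun i => bval (x (σ i))) p) / (Nat.factorial n : ℝ) =
          q.eval (∑ i : Fin n, bval (x i)) := by
  obtain ⟨q, hdeg, hq⟩ := symmetrization_univariate_general p
  refine ⟨C (n ! : ℝ)⁻¹ * q, (natDegree_C_mul_le _ _).trans hdeg, fun x => ?_⟩
  have h := hq (fun i => bval (x i)) fun i => isIdempotentElem_bval (x i)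
  simp only [MvPolynomial.aeval_eq_eval, coe_aeval_eq_eval] at h
  rw [eval_C_mul, ← h, div_eq_inv_mul]
end

section
/- Let n ≥ 1 be an integer, let b₁ ≤ b₂ and c > 0 be reals, and let p ∈ ℝ[x] be a univariate real polynomial such that b₁ ≤ p(i) ≤ b₂ for every integer 0 ≤ i ≤ n, and such that |p′(x₀)| ≥ c for some real 0 ≤ x₀ ≤ n. Then deg(p) ≥ √(c·n/(c + b₂ − b₁)). -/
/-!
Let `k` be the maximum of `|p'|` on `[0, n]`. Every point of `[0, n]` is within `1/2` of an integer
grid point, so `p` takes values in `[b₁ - k/2, b₂ + k/2]` there, and the Markov brothers' inequality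
gives `k n ≤ (b₂ - b₁ + k) (deg p)²`. Since `t ↦ t / (t + b₂ - b₁)` is increasing, `k ≥ c` may be
replaced by `c`.

Markov's inequality itself is derived from the extremality of the Chebyshev polynomials at the
endpoint `1`. Applied to `K² - 2 (1 - X²) B²`, it gives Schur's inequality: if
`|sin θ · B (cos θ)| ≤ K` for all `θ`, then `|B 1| ≤ (deg B + 1) K`, and by rescaling the variable
the same bound holds on all of `[-1, 1]`. The part of `φ ↦ P (cos (θ - φ))` that is odd in `φ` has
the form `sin φ · B (cos φ)` with `B 1 = sin θ · P' (cos θ)`, so Schur's inequality for `B` is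
Bernstein's inequality for `P`. Schur's inequality for `P'` then turns Bernstein's inequality into
Markov's.
-/

section PolynomialInequalities

open Polynomial Real

lemma X_mul_mem_degreeLT_succ {R : Type*} [Semiring R] {d : ℕ} {P : R[X]} (hP : P ∈ degreeLT R d) :
    X * P ∈ degreeLT R (d + 1) := by
  rw [mem_degreeLT, degree_lt_iff_coeff_zero] at hP ⊢
  rintro (_ | m) hm
  · exact coeff_X_mul_zero P
  · rw [coeff_X_mul]
    exact hP m (by lia)

lemma exists_eval_eq_add_mul_of_sq_add_sq_eq_one {R : Type*} [CommRing R] (y v : R) {d : ℕ}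
    {P : R[X]} (hP : P.natDegree ≤ d) :
    ∃ A ∈ degreeLT R (d + 1), ∃ B ∈ degreeLT R d, ∀ x u : R, x ^ 2 + u ^ 2 = 1 →
      P.eval (y * x + v * u) = A.eval x + u * B.eval x := by
  induction d generalizing P with
  | zero =>
    obtain ⟨a, rfl⟩ := natDegree_eq_zero.mp (Nat.le_zero.mp hP)
    exact ⟨C a, mem_degreeLT.mpr (degree_C_le.trans_lt (by simp)), 0, zero_mem _, by simp⟩
  | succ d ih =>
    have hdivX : P.divX.natDegree ≤ d := by
      rw [natDegree_divX_eq_natDegree_tsub_one]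
      lia
    obtain ⟨A, hA, B, hB, hAB⟩ := ih hdivX
    have hXB := X_mul_mem_degreeLT_succ hB
    -- Multiply `A + u B` by `y x + v u` and reduce `u ^ 2` to `1 - x ^ 2`.
    refine ⟨y • (X * A) + v • (B - X * (X * B)) + C (P.coeff 0), ?_, y • (X * B) + v • A, ?_, ?_⟩
    · have hB' := degreeLT_mono (show d ≤ d + 1 + 1 by lia) hB
      have hC : C (P.coeff 0) ∈ degreeLT R (d + 1 + 1) :=
        mem_degreeLT.mpr (degree_C_le.trans_lt (mod_cast Nat.succ_pos (d + 1)))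
      exact add_mem (add_mem (Submodule.smul_mem _ _ (X_mul_mem_degreeLT_succ hA))
        (Submodule.smul_mem _ _ (sub_mem hB' (X_mul_mem_degreeLT_succ hXB)))) hC
    · exact add_mem (Submodule.smul_mem _ _ hXB) (Submodule.smul_mem _ _ hA)
    · intro x u hxu
      nth_rewrite 1 [← P.divX_mul_X_add]
      simp only [eval_add, eval_sub, eval_mul, eval_smul, eval_X, eval_C, smul_eq_mul, hAB x u hxu]
      linear_combination (v * B.eval x) * hxu

lemma eval_derivative_one_le_of_forall_abs_le {d : ℕ} {P : ℝ[X]} {M : ℝ} (hP : P.natDegree ≤ d)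
    (hM : ∀ x ∈ Set.Icc (-1 : ℝ) 1, |P.eval x| ≤ M) : P.derivative.eval 1 ≤ d ^ 2 * M := by
  have hM₀ : 0 ≤ M := (abs_nonneg _).trans (hM 0 (by simp))
  rcases hM₀.eq_or_lt with rfl | hMpos
  · have hP₀ : P = 0 := eq_zero_of_infinite_isRoot P <|
      (Set.Icc_infinite (by norm_num : (-1 : ℝ) < 1)).mono fun x hx =>
        abs_nonpos_iff.mp (hM x hx)
    simp [hP₀]
  · have hscaled : ∀ x ∈ Set.Icc (-1 : ℝ) 1, |(C M⁻¹ * P).eval x| ≤ 1 := fun x hx => by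
      rw [eval_C_mul, abs_mul, abs_of_pos (inv_pos.mpr hMpos), inv_mul_le_one₀ hMpos]
      exact hM x hx
    have hdeg : (C M⁻¹ * P).degree ≤ d :=
      natDegree_le_iff_degree_le.mp ((natDegree_C_mul_le _ _).trans hP)
    have hT :=
      Chebyshev.eval_iterate_derivative_le_of_forall_abs_le_one (k := 1) le_rfl hdeg hscaled
    rw [Function.iterate_one, Chebyshev.derivative_T_eval_one, derivative_C_mul, eval_C_mul,
      inv_mul_le_iff₀' hMpos] at hT
    exact_mod_cast hT

lemma abs_eval_one_le_of_forall_abs_sin_mul_le {d : ℕ} {B : ℝ[X]} {K : ℝ} (hB : B ∈ degreeLT ℝ d)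
    (hK : ∀ θ : ℝ, |sin θ * B.eval (cos θ)| ≤ K) : |B.eval 1| ≤ d * K := by
  have hK₀ : 0 ≤ K := (abs_nonneg _).trans (hK 0)
  set Q : ℝ[X] := C (K ^ 2) - C 2 * (B ^ 2 - (X * B) ^ 2)
  have hQdeg : Q.natDegree ≤ 2 * d := by
    have hBdeg : B.natDegree ≤ d := natDegree_le_iff_degree_le.mpr (mem_degreeLT.mp hB).le
    have hXBdeg : (X * B).natDegree ≤ d :=
      natDegree_le_iff_degree_le.mpr (Order.lt_succ_iff.mp
        (mem_degreeLT.mp (X_mul_mem_degreeLT_succ hB)))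
    refine natDegree_sub_le_of_le (by simp) ((natDegree_C_mul_le _ _).trans ?_) |>.trans
      (max_self _).le
    exact (natDegree_sub_le_of_le (natDegree_pow_le_of_le 2 hBdeg)
      (natDegree_pow_le_of_le 2 hXBdeg)).trans (max_self _).le
  have hQ : ∀ x ∈ Set.Icc (-1 : ℝ) 1, |Q.eval x| ≤ K ^ 2 := fun x hx => by
    have hcos : cos (arccos x) = x := cos_arccos hx.1 hx.2
    have hsq : (sin (arccos x) * B.eval x) ^ 2 ≤ K ^ 2 := by
      simpa only [hcos, sq_abs] using pow_le_pow_left₀ (abs_nonneg _) (hK (arccos x)) 2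
    have hQx : Q.eval x = K ^ 2 - 2 * (sin (arccos x) * B.eval x) ^ 2 := by
      rw [mul_pow, sin_sq, hcos]
      simp only [Q, eval_sub, eval_mul, eval_pow, eval_C, eval_X]
      ring
    rw [hQx, abs_le]
    constructor <;> linarith [sq_nonneg (sin (arccos x) * B.eval x)]
  have hQ' : Q.derivative.eval 1 = 4 * B.eval 1 ^ 2 := by
    simp only [Q, derivative_sub, derivative_C, derivative_pow, derivative_mul, derivative_X,
      eval_sub, eval_add, eval_mul, eval_pow, eval_X, eval_C, eval_one, eval_zero]
    ring
  have hQ'_le := eval_derivative_one_le_of_forall_abs_le hQdeg hQ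
  refine abs_le_of_sq_le_sq ?_ (by positivity)
  push_cast at hQ'_le
  linarith

lemma abs_eval_le_of_forall_abs_sin_mul_le {d : ℕ} {B : ℝ[X]} {K : ℝ} (hB : B ∈ degreeLT ℝ d)
    (hK : ∀ θ : ℝ, |sin θ * B.eval (cos θ)| ≤ K) {y : ℝ} (hy : y ∈ Set.Icc (-1 : ℝ) 1) :
    |B.eval y| ≤ d * K := by
  have hdeg : B.comp (C y * X) ∈ degreeLT ℝ d := by
    rw [mem_degreeLT, degree_lt_iff_coeff_zero] at hB ⊢
    intro m hm
    rw [comp_C_mul_X_coeff, hB m hm, zero_mul]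
  have hscaled (φ : ℝ) : |sin φ * (B.comp (C y * X)).eval (cos φ)| ≤ K := by
    have hsq_le : (y * cos φ) ^ 2 ≤ cos φ ^ 2 := by
      rw [mul_pow]
      exact mul_le_of_le_one_left (sq_nonneg _) ((sq_le_one_iff_abs_le_one y).mpr (abs_le.mpr hy))
    have habs : |y * cos φ| ≤ 1 := (sq_le_sq.mp hsq_le).trans (abs_cos_le_one φ)
    have hcos : cos (arccos (y * cos φ)) = y * cos φ :=
      cos_arccos (abs_le.mp habs).1 (abs_le.mp habs).2
    have hsin : |sin φ| ≤ |sin (arccos (y * cos φ))| := by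
      rw [← sq_le_sq, sin_sq, sin_sq, hcos]
      linarith
    calc |sin φ * (B.comp (C y * X)).eval (cos φ)|
        = |sin φ| * |B.eval (y * cos φ)| := by simp [abs_mul]
      _ ≤ |sin (arccos (y * cos φ))| * |B.eval (y * cos φ)| := by gcongr
      _ ≤ K := by simpa only [hcos, abs_mul] using hK (arccos (y * cos φ))
  simpa using abs_eval_one_le_of_forall_abs_sin_mul_le hdeg hscaled

lemma eval_one_eq_sin_mul_eval_derivative_cos {P A B : ℝ[X]} {θ : ℝ}
    (hsplit : ∀ φ, P.eval (cos (θ - φ)) = A.eval (cos φ) + sin φ * B.eval (cos φ)) :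
    B.eval 1 = sin θ * P.derivative.eval (cos θ) := by
  have hleft : HasDerivAt (fun φ => P.eval (cos (θ - φ)))
      (sin θ * P.derivative.eval (cos θ)) 0 := by
    have hcos : HasDerivAt (fun φ => cos (θ - φ)) (sin θ) 0 := by
      simpa using ((hasDerivAt_id (0 : ℝ)).const_sub θ).cos
    simpa [mul_comm] using! (P.hasDerivAt (cos (θ - 0))).comp 0 hcos
  have hright : HasDerivAt (fun φ => A.eval (cos φ) + sin φ * B.eval (cos φ)) (B.eval 1) 0 := by
    have hA := (A.hasDerivAt (cos 0)).comp 0 (hasDerivAt_cos 0)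
    have hB := (B.hasDerivAt (cos 0)).comp 0 (hasDerivAt_cos 0)
    simpa using! hA.add ((hasDerivAt_sin 0).mul hB)
  rw [← funext hsplit] at hright
  exact hright.unique hleft

lemma abs_sin_mul_eval_derivative_cos_le {d : ℕ} {P : ℝ[X]} {M : ℝ} (hP : P.natDegree ≤ d)
    (hM : ∀ x ∈ Set.Icc (-1 : ℝ) 1, |P.eval x| ≤ M) (θ : ℝ) :
    |sin θ * P.derivative.eval (cos θ)| ≤ d * M := by
  obtain ⟨A, -, B, hB, hAB⟩ := exists_eval_eq_add_mul_of_sq_add_sq_eq_one (cos θ) (sin θ) hP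
  have hsplit (φ : ℝ) : P.eval (cos (θ - φ)) = A.eval (cos φ) + sin φ * B.eval (cos φ) := by
    rw [cos_sub, hAB _ _ (cos_sq_add_sin_sq φ)]
  rw [← eval_one_eq_sin_mul_eval_derivative_cos hsplit]
  refine abs_eval_one_le_of_forall_abs_sin_mul_le hB fun φ => ?_
  have hplus := hsplit φ
  have hminus := hsplit (-φ)
  rw [cos_neg, sin_neg] at hminus
  have hM_plus := abs_le.mp (hM _ (cos_mem_Icc (θ - φ)))
  have hM_minus := abs_le.mp (hM _ (cos_mem_Icc (θ - -φ)))
  rw [abs_le]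
  constructor <;> linarith

theorem abs_eval_derivative_le_of_forall_abs_le {d : ℕ} {P : ℝ[X]} {M : ℝ} (hP : P.natDegree ≤ d)
    (hM : ∀ x ∈ Set.Icc (-1 : ℝ) 1, |P.eval x| ≤ M) {y : ℝ} (hy : y ∈ Set.Icc (-1 : ℝ) 1) :
    |P.derivative.eval y| ≤ d ^ 2 * M := by
  have hP' : derivative P ∈ degreeLT ℝ d := by
    rw [mem_degreeLT]
    rcases eq_or_ne P 0 with rfl | hP₀
    · simp
    · exact (degree_derivative_lt hP₀).trans_le (natDegree_le_iff_degree_le.mp hP)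
  calc |P.derivative.eval y| ≤ d * (d * M) :=
        abs_eval_le_of_forall_abs_sin_mul_le hP' (abs_sin_mul_eval_derivative_cos_le hP hM) hy
    _ = d ^ 2 * M := by ring

theorem sub_mul_abs_eval_derivative_le_of_forall_mem_Icc {P : ℝ[X]} {a b m M : ℝ}
    (hM : ∀ x ∈ Set.Icc a b, P.eval x ∈ Set.Icc m M) {y : ℝ} (hy : y ∈ Set.Icc a b) :
    (b - a) * |P.derivative.eval y| ≤ (M - m) * P.natDegree ^ 2 := by
  rcases (hy.1.trans hy.2).eq_or_lt with rfl | hab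
  · have hmM : m ≤ M := (hM y hy).1.trans (hM y hy).2
    rw [sub_self, zero_mul]
    exact mul_nonneg (sub_nonneg.mpr hmM) (sq_nonneg _)
  set L : ℝ[X] := C ((b - a) / 2) * X + C ((a + b) / 2) with hL
  set Q : ℝ[X] := P.comp L - C ((m + M) / 2) with hQ
  have hQdeg : Q.natDegree ≤ P.natDegree := by
    rw [hQ, natDegree_sub_C]
    exact natDegree_comp_le.trans (mul_le_of_le_one_right (Nat.zero_le _) natDegree_linear_le)
  have hQ_le : ∀ t ∈ Set.Icc (-1 : ℝ) 1, |Q.eval t| ≤ (M - m) / 2 := fun t ht => by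
    have hLt : L.eval t ∈ Set.Icc a b := by
      simp only [hL, eval_add, eval_mul, eval_C, eval_X]
      constructor <;> nlinarith [ht.1, ht.2]
    obtain ⟨hlower, hupper⟩ := hM _ hLt
    rw [hQ, eval_sub, eval_comp, eval_C, abs_le]
    constructor <;> linarith
  obtain ⟨t, ht, hty⟩ : ∃ t ∈ Set.Icc (-1 : ℝ) 1, L.eval t = y := by
    refine ⟨(2 * y - (a + b)) / (b - a), ⟨?_, ?_⟩, ?_⟩
    · rw [le_div_iff₀ (sub_pos.mpr hab)]
      linarith [hy.1]
    · rw [div_le_one (sub_pos.mpr hab)]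
      linarith [hy.2]
    · simp only [hL, eval_add, eval_mul, eval_C, eval_X]
      field [(sub_pos.mpr hab).ne']
  have hQ' : Q.derivative.eval t = (b - a) / 2 * P.derivative.eval y := by
    simp [hQ, hL, derivative_comp, ← hty]
  have hmarkov := abs_eval_derivative_le_of_forall_abs_le hQdeg hQ_le ht
  rw [hQ', abs_mul, abs_of_pos (half_pos (sub_pos.mpr hab))] at hmarkov
  linarith

end PolynomialInequalities

lemma exists_nat_le_and_abs_sub_le_half {n : ℕ} {x : ℝ} (hx : x ∈ Set.Icc (0 : ℝ) n) :
    ∃ i ≤ n, |x - i| ≤ 1 / 2 := by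
  have hround : 0 ≤ round x := by
    rw [round_eq]
    exact Int.floor_nonneg.mpr (by linarith [hx.1])
  lift round x to ℕ using hround with i hi
  have hdist : |x - i| ≤ 1 / 2 := by simpa [← hi] using abs_sub_round x
  have hlt : (i : ℝ) < n + 1 := by linarith [(abs_le.mp hdist).1, hx.2]
  exact ⟨i, Nat.lt_succ_iff.mp (mod_cast hlt), hdist⟩

lemma mem_Icc_of_forall_nat_mem_Icc_of_abs_deriv_le {f : ℝ → ℝ} {n : ℕ} {b₁ b₂ k : ℝ}
    (hf : ∀ x ∈ Set.Icc (0 : ℝ) n, DifferentiableAt ℝ f x)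
    (hk : ∀ x ∈ Set.Icc (0 : ℝ) n, |deriv f x| ≤ k)
    (hb : ∀ i : ℕ, i ≤ n → f i ∈ Set.Icc b₁ b₂) {x : ℝ} (hx : x ∈ Set.Icc (0 : ℝ) n) :
    f x ∈ Set.Icc (b₁ - k / 2) (b₂ + k / 2) := by
  obtain ⟨i, hin, hxi⟩ := exists_nat_le_and_abs_sub_le_half hx
  have hi : (i : ℝ) ∈ Set.Icc (0 : ℝ) n := ⟨i.cast_nonneg, mod_cast hin⟩
  have hk₀ : 0 ≤ k := (abs_nonneg _).trans (hk x hx)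
  have hdiff : |f x - f i| ≤ k / 2 :=
    calc |f x - f i| ≤ k * |x - i| :=
          (convex_Icc (0 : ℝ) n).norm_image_sub_le_of_norm_deriv_le hf hk hi hx
      _ ≤ k * (1 / 2) := by gcongr
      _ = k / 2 := by ring
  obtain ⟨hlower, hupper⟩ := hb i hin
  constructor <;> linarith [(abs_le.mp hdiff).1, (abs_le.mp hdiff).2]

/-- A consequence of the Markov brothers' inequality: if a univariate real polynomial
`p` satisfies `b₁ ≤ p(i) ≤ b₂` at every integer `0 ≤ i ≤ n` and `|p′(x₀)| ≥ c > 0` at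
some real `0 ≤ x₀ ≤ n`, then `deg p ≥ √(c·n/(c + b₂ − b₁))`. -/
theorem degree_ge_sqrt_of_bounded_values_of_large_derivative
    (n : ℕ) (hn : 1 ≤ n) (b₁ b₂ c : ℝ) (hb : b₁ ≤ b₂) (hc : 0 < c)
    (p : Polynomial ℝ)
    (hbound : ∀ i : ℕ, i ≤ n → b₁ ≤ p.eval (i : ℝ) ∧ p.eval (i : ℝ) ≤ b₂)
    (x₀ : ℝ) (hx₀ : 0 ≤ x₀) (hx₀' : x₀ ≤ n)
    (hder : c ≤ |p.derivative.eval x₀|) :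
    Real.sqrt (c * n / (c + b₂ - b₁)) ≤ (p.natDegree : ℝ) := by
  obtain ⟨x₁, hx₁, hmax⟩ := isCompact_Icc.exists_isMaxOn (s := Set.Icc (0 : ℝ) n)
    ⟨x₀, hx₀, hx₀'⟩ p.derivative.continuous.abs.continuousOn
  set k := |p.derivative.eval x₁|
  have hck : c ≤ k := hder.trans (hmax ⟨hx₀, hx₀'⟩)
  have hvalues : ∀ x ∈ Set.Icc (0 : ℝ) n, p.eval x ∈ Set.Icc (b₁ - k / 2) (b₂ + k / 2) :=
    fun x hx => mem_Icc_of_forall_nat_mem_Icc_of_abs_deriv_le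
      (fun _ _ => p.differentiableAt) (fun t ht => by rw [p.deriv]; exact hmax ht) hbound hx
  have hmarkov : (n - 0) * k ≤ (b₂ + k / 2 - (b₁ - k / 2)) * (p.natDegree : ℝ) ^ 2 :=
    sub_mul_abs_eval_derivative_le_of_forall_mem_Icc hvalues hx₁
  refine Real.sqrt_le_iff.mpr ⟨by positivity, ?_⟩
  calc c * n / (c + b₂ - b₁) ≤ k * n / (k + b₂ - b₁) := by
        rw [div_le_div_iff₀ (by linarith) (by linarith)]
        nlinarith [mul_nonneg (Nat.cast_nonneg (α := ℝ) n)
          (mul_nonneg (sub_nonneg.mpr hck) (sub_nonneg.mpr hb))]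
    _ ≤ (p.natDegree : ℝ) ^ 2 := by
        rw [div_le_iff₀ (by linarith)]
        linarith
end

section
/- Let f : {0,1}^n → {0,1} be a Boolean function with f(0,…,0) = 0 and f(x) = 1 for every x ∈ {0,1}^n of Hamming weight exactly 1. Then deg(f) ≥ √(n/2). -/
/-- The sensitivity `s(f)` of a Boolean function `f : {0,1}^n → {0,1}`:
the maximum over inputs `x` of the number of coordinates `i` such that flipping
the `i`-th bit of `x` changes the value of `f`. -/
def sens {n : ℕ} (f : (Fin n → Bool) → Bool) : ℕ :=
  Finset.univ.sup fun x : Fin n → Bool =>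
    (Finset.univ.filter fun i : Fin n => f (Function.update x i (!x i)) ≠ f x).card

/-- The block sensitivity `bs(f)` of a Boolean function `f : {0,1}^n → {0,1}`:
the maximum `t` such that there are an input `x` and `t` pairwise disjoint nonempty
blocks `B₁, …, B_t` of coordinates, flipping any one of which changes the value of `f`. -/
noncomputable def blockSens {n : ℕ} (f : (Fin n → Bool) → Bool) : ℕ :=
  sSup {t : ℕ | ∃ x : Fin n → Bool, ∃ B : Fin t → Finset (Fin n),
    (∀ i, (B i).Nonempty) ∧ (∀ i j, i ≠ j → Disjoint (B i) (B j)) ∧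
    (∀ i, f (fun k => if k ∈ B i then !x k else x k) ≠ f x)}

/-- A multivariate polynomial is multilinear if each variable occurs with exponent
at most 1 in every monomial. -/
def Multilinear {n : ℕ} (p : MvPolynomial (Fin n) ℝ) : Prop :=
  ∀ m ∈ p.support, ∀ i : Fin n, m i ≤ 1

/-- A real polynomial `p` represents the Boolean function `f` if `p(x) = f(x)` for
all `x ∈ {0,1}^n`. -/
def Represents {n : ℕ} (p : MvPolynomial (Fin n) ℝ) (f : (Fin n → Bool) → Bool) : Prop :=
  ∀ x : Fin n → Bool, MvPolynomial.eval (fun i => bval (x i)) p = bval (f x)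

/-- A real polynomial `p` approximates the Boolean function `f` if
`|p(x) − f(x)| < 1/3` for all `x ∈ {0,1}^n`. -/
def Approximates {n : ℕ} (p : MvPolynomial (Fin n) ℝ) (f : (Fin n → Bool) → Bool) : Prop :=
  ∀ x : Fin n → Bool, |MvPolynomial.eval (fun i => bval (x i)) p - bval (f x)| < 1 / 3

/-!
For `t ∈ [0, 1]` let `P t` be the mean of `p x` over random `x ∈ {0,1}ⁿ` whose coordinates are
independently `1` with probability `t`. On the cube a monomial equals the product of its distinct
variables, whose mean is a power of `t`; hence `P` is a polynomial in `t` of degree at most `deg p`.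
As a mean of values in `[0, 1]`, `P` maps `[0, 1]` into itself, so the endpoint case of Markov's
inequality gives `P' 0 ≤ (deg p)²`. Only inputs of weight at most `1` contribute to the derivative
at `0`, which is `∑ i, (p eᵢ - p 0) = n`.
-/

open Finset Polynomial

section BernoulliMean

variable {ι R : Type*} [Fintype ι]

/-- The mean of `g` over a random subset of `ι` that contains each element independently with
probability `X`, as a polynomial in `X`. A point of the cube `{0,1}^ι` is encoded as the set of its
nonzero coordinates. -/
noncomputable def bernoulliMean [CommRing R] (g : Finset ι → R) : R[X] :=
  ∑ s, C (g s) * (X ^ #s * (1 - X) ^ (Fintype.card ι - #s))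

section CommRing

variable [CommRing R]

theorem eval_bernoulliMean (g : Finset ι → R) (t : R) :
    (bernoulliMean g).eval t = ∑ s, t ^ #s * (1 - t) ^ (Fintype.card ι - #s) * g s := by
  simp [bernoulliMean, eval_finsetSum, mul_comm]

theorem bernoulliMean_prod_ite [DecidableEq ι] (a b : ι → R) :
    bernoulliMean (fun s ↦ ∏ i, if i ∈ s then a i else b i) =
      ∏ i, (C (a i) * X + C (b i) * (1 - X)) := by
  rw [bernoulliMean, Fintype.prod_add]
  refine sum_congr rfl fun s _ ↦ ?_
  have prod_split : ∏ i, (if i ∈ s then a i else b i) = (∏ i ∈ s, a i) * ∏ i ∈ sᶜ, b i := by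
    rw [← prod_mul_prod_compl s]
    congr 1
    · exact prod_congr rfl fun i hi ↦ if_pos hi
    · exact prod_congr rfl fun i hi ↦ if_neg (mem_compl.mp hi)
  simp only [prod_split, prod_mul_distrib, prod_const, card_compl, C_mul, map_prod]
  ring

theorem bernoulliMean_eval_indicator (p : MvPolynomial ι R) :
    bernoulliMean (fun s : Finset ι ↦ p.eval ((s : Set ι).indicator 1)) =
      ∑ m ∈ p.support, C (p.coeff m) * ∏ i, (X + C (0 ^ m i) * (1 - X)) := by
  classical
  have mean_monomial (m : ι →₀ ℕ) :
      bernoulliMean (fun s : Finset ι ↦ ∏ i, (s : Set ι).indicator (1 : ι → R) i ^ m i) =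
        ∏ i, (X + C (0 ^ m i) * (1 - X)) := by
    simpa [Set.indicator_apply, ite_pow] using
      bernoulliMean_prod_ite (1 : ι → R) fun i ↦ 0 ^ m i
  simp only [← mean_monomial, bernoulliMean, MvPolynomial.eval_eq', map_sum, C_mul, sum_mul,
    mul_sum]
  rw [sum_comm]
  simp only [mul_assoc]

theorem natDegree_X_add_C_zero_pow_mul_le (k : ℕ) :
    (X + C (0 ^ k) * (1 - X) : R[X]).natDegree ≤ k := by
  rcases k with _ | k
  · simp
  · simpa using natDegree_X_le.trans (Nat.le_add_left 1 k)

theorem natDegree_bernoulliMean_eval_indicator_le (p : MvPolynomial ι R) :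
    (bernoulliMean fun s : Finset ι ↦ p.eval ((s : Set ι).indicator 1)).natDegree ≤
      p.totalDegree := by
  rw [bernoulliMean_eval_indicator]
  refine natDegree_sum_le_of_forall_le _ _ fun m hm ↦ ?_
  calc (C (p.coeff m) * ∏ i, (X + C (0 ^ m i) * (1 - X))).natDegree
      ≤ (∏ i, (X + C (0 ^ m i) * (1 - X) : R[X])).natDegree := natDegree_C_mul_le _ _
    _ ≤ ∑ i, (X + C (0 ^ m i) * (1 - X) : R[X]).natDegree := natDegree_prod_le _ _
    _ ≤ ∑ i, m i := sum_le_sum fun i _ ↦ natDegree_X_add_C_zero_pow_mul_le (m i)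
    _ = m.sum fun _ e ↦ e := (m.sum_fintype (fun _ e ↦ e) fun _ ↦ rfl).symm
    _ ≤ p.totalDegree := MvPolynomial.le_totalDegree hm

theorem derivative_X_pow_mul_one_sub_X_pow_eval_zero (k l : ℕ) :
    (derivative (X ^ k * (1 - X) ^ l : R[X])).eval 0 =
      (if k = 1 then 1 else 0) - if k = 0 then (l : R) else 0 := by
  rcases k with _ | _ | k <;> simp [derivative_pow]

theorem sum_ite_card_eq_one {M : Type*} [AddCommMonoid M] (g : Finset ι → M) :
    ∑ s, (if #s = 1 then g s else 0) = ∑ i, g {i} := by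
  rw [← sum_filter, univ_filter_card_eq, powersetCard_one, sum_map]
  rfl

theorem derivative_bernoulliMean_eval_zero (g : Finset ι → R) :
    (derivative (bernoulliMean g)).eval 0 = ∑ i, (g {i} - g ∅) := by
  calc (derivative (bernoulliMean g)).eval 0
      = ∑ s, ((if #s = 1 then g s else 0) -
          if #s = 0 then g s * (Fintype.card ι - #s : ℕ) else 0) := by
        simp only [bernoulliMean, derivative_sum, eval_finsetSum, derivative_C_mul, eval_C_mul,
          derivative_X_pow_mul_one_sub_X_pow_eval_zero, mul_sub, mul_ite, mul_one, mul_zero]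
    _ = ∑ i, (g {i} - g ∅) := by
        classical
        simp [sum_ite_card_eq_one, mul_comm]

end CommRing

theorem eval_bernoulliMean_mem [Field R] [LinearOrder R] [IsStrictOrderedRing R] {K : Set R}
    (hK : Convex R K) {g : Finset ι → R} (hg : ∀ s, g s ∈ K) {t : R} (ht : t ∈ Set.Icc 0 1) :
    (bernoulliMean g).eval t ∈ K := by
  rw [eval_bernoulliMean]
  refine hK.sum_mem (fun s _ ↦ ?_) ?_ fun s _ ↦ hg s
  · exact mul_nonneg (pow_nonneg ht.1 _) (pow_nonneg (sub_nonneg.mpr ht.2) _)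
  · simp [Fintype.sum_pow_mul_eq_add_pow]

end BernoulliMean

theorem derivative_eval_one_le_sq_of_forall_abs_le_one {P : ℝ[X]} {d : ℕ} (hdeg : P.natDegree ≤ d)
    (hP : ∀ x ∈ Set.Icc (-1) 1, |P.eval x| ≤ 1) : (derivative P).eval 1 ≤ (d : ℝ) ^ 2 := by
  simpa [Chebyshev.derivative_T_eval_one] using
    Chebyshev.eval_iterate_derivative_le_of_forall_abs_le_one (k := 1) le_rfl
      (natDegree_le_iff_degree_le.mp hdeg) hP

theorem derivative_eval_zero_le_sq_of_mapsTo {P : ℝ[X]} {d : ℕ} (hdeg : P.natDegree ≤ d)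
    (hP : Set.MapsTo P.eval (Set.Icc 0 1) (Set.Icc 0 1)) :
    (derivative P).eval 0 ≤ (d : ℝ) ^ 2 := by
  -- `x ↦ (1 - x) / 2` carries `[-1, 1]` to `[0, 1]` and `1` to `0`, `y ↦ 1 - 2 * y` carries
  -- `[0, 1]` back to `[-1, 1]`, and their slopes cancel in the derivative.
  set Q : ℝ[X] := 1 - C 2 * P.comp (C (1 / 2) * (1 - X)) with hQ
  have Q_eval (x : ℝ) : Q.eval x = 1 - 2 * P.eval ((1 - x) / 2) := by
    simp [hQ, eval_comp, div_eq_inv_mul]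
  have Q_degree : Q.natDegree ≤ d := by
    have inner_degree : (C (1 / 2) * (1 - X) : ℝ[X]).natDegree ≤ 1 := by compute_degree
    have comp_degree : (P.comp (C (1 / 2) * (1 - X))).natDegree ≤ d :=
      natDegree_comp_le.trans <| (Nat.mul_le_mul hdeg inner_degree).trans_eq (mul_one d)
    exact natDegree_sub_le_of_le (natDegree_one.trans_le d.zero_le)
      ((natDegree_C_mul_le _ _).trans comp_degree) |>.trans_eq (max_self d)
  have Q_bound : ∀ x ∈ Set.Icc (-1) 1, |Q.eval x| ≤ 1 := fun x hx ↦ by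
    have P_bound := hP (x := (1 - x) / 2) ⟨by linarith [hx.2], by linarith [hx.1]⟩
    rw [Q_eval, abs_le]
    constructor <;> linarith [P_bound.1, P_bound.2]
  have Q_derivative : (derivative Q).eval 1 = (derivative P).eval 0 := by
    simp [hQ, derivative_comp, eval_comp]
  exact Q_derivative ▸ derivative_eval_one_le_sq_of_forall_abs_le_one Q_degree Q_bound

theorem sum_eval_indicator_singleton_sub_eval_zero_le_sq_totalDegree
    {ι : Type*} [Fintype ι] {p : MvPolynomial ι ℝ}
    (hp : ∀ s : Set ι, p.eval (s.indicator 1) ∈ Set.Icc 0 1) :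
    ∑ i, (p.eval (Set.indicator {i} 1) - p.eval 0) ≤ (p.totalDegree : ℝ) ^ 2 := by
  have mean_mapsTo : Set.MapsTo
      (bernoulliMean fun s : Finset ι ↦ p.eval ((s : Set ι).indicator 1)).eval
      (Set.Icc 0 1) (Set.Icc 0 1) :=
    fun _ ht ↦ eval_bernoulliMean_mem (convex_Icc (0 : ℝ) 1) (fun s : Finset ι ↦ hp s) ht
  simpa only [derivative_bernoulliMean_eval_zero, coe_singleton, coe_empty, Set.indicator_empty']
    using derivative_eval_zero_le_sq_of_mapsTo
      (natDegree_bernoulliMean_eval_indicator_le p) mean_mapsTo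

theorem degree_ge_sqrt_half_n_general {ι : Type*} [Fintype ι] {p : MvPolynomial ι ℝ}
    (hp : ∀ s : Set ι, p.eval (s.indicator 1) ∈ Set.Icc 0 1)
    (h0 : p.eval 0 = 0) (h1 : ∀ i, p.eval (Set.indicator {i} 1) = 1) :
    √(Fintype.card ι) ≤ p.totalDegree := by
  refine Real.sqrt_le_iff.mpr ⟨Nat.cast_nonneg _, ?_⟩
  simpa only [h0, h1, sub_zero, sum_const, card_univ, nsmul_eq_mul, mul_one] using
    sum_eval_indicator_singleton_sub_eval_zero_le_sq_totalDegree hp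

theorem bval_mem_Icc (b : Bool) : bval b ∈ Set.Icc 0 1 := by
  cases b <;> simp [bval]

namespace Represents

variable {n : ℕ} {f : (Fin n → Bool) → Bool} {p : MvPolynomial (Fin n) ℝ}

theorem eval_indicator (hrep : Represents p f) (s : Set (Fin n)) [DecidablePred (· ∈ s)] :
    p.eval (s.indicator 1) = bval (f fun i ↦ decide (i ∈ s)) := by
  rw [← hrep]
  congr 2 with i
  simp [bval, Set.indicator_apply]

theorem eval_indicator_mem_Icc (hrep : Represents p f) (s : Set (Fin n)) :
    p.eval (s.indicator 1) ∈ Set.Icc 0 1 := by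
  classical exact hrep.eval_indicator s ▸ bval_mem_Icc _

theorem eval_zero (hrep : Represents p f) (h0 : f (fun _ ↦ false) = false) : p.eval 0 = 0 := by
  simpa [h0, bval] using hrep.eval_indicator ∅

theorem eval_indicator_singleton (hrep : Represents p f)
    (h1 : ∀ x : Fin n → Bool, #{i | x i = true} = 1 → f x = true) (i : Fin n) :
    p.eval (Set.indicator {i} 1) = 1 := by
  rw [hrep.eval_indicator, h1 _ (by simp [filter_eq'])]
  simp [bval]

end Represents

/-- If `f(0,…,0) = 0` and `f(x) = 1` for every `x` of Hamming weight 1, then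
`deg f ≥ √(n/2)`, where `deg f` is the degree of the (unique) multilinear real
polynomial representing `f`. -/
theorem degree_ge_sqrt_half_n (n : ℕ) (f : (Fin n → Bool) → Bool)
    (h0 : f (fun _ => false) = false)
    (h1 : ∀ x : Fin n → Bool,
      (Finset.univ.filter fun i => x i = true).card = 1 → f x = true)
    (p : MvPolynomial (Fin n) ℝ) (hml : Multilinear p) (hrep : Represents p f) :
    Real.sqrt ((n : ℝ) / 2) ≤ (p.totalDegree : ℝ) := by
  refine (Real.sqrt_le_sqrt (half_le_self n.cast_nonneg)).trans ?_
  simpa using degree_ge_sqrt_half_n_general hrep.eval_indicator_mem_Icc (hrep.eval_zero h0)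
    (hrep.eval_indicator_singleton h1)
end

section
/- Define real matrices A₁ = [[0,1],[1,0]] (of size 2×2) and, recursively for n ≥ 2, A_n = [[A_{n−1}, I],[I, −A_{n−1}]] (a block matrix of size 2^n × 2^n, where I is the identity of size 2^(n−1)). Then for every n ≥ 1, A_n is symmetric, has trace 0, and satisfies A_n² = n·I (the n-fold scalar multiple of the 2^n × 2^n identity matrix); consequently every eigenvalue of A_n is √n or −√n, and each occurs with multiplicity 2^(n−1). -/
/-- Index type for the `2^n × 2^n` matrices `A_n`: `hIdx n` has `2^n` elements. -/
def hIdx : ℕ → Type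
  | 0 => Unit
  | n + 1 => hIdx n ⊕ hIdx n

instance hIdxFintype : (n : ℕ) → Fintype (hIdx n)
  | 0 => inferInstanceAs (Fintype Unit)
  | n + 1 => @instFintypeSum _ _ (hIdxFintype n) (hIdxFintype n)

instance hIdxDecidableEq : (n : ℕ) → DecidableEq (hIdx n)
  | 0 => inferInstanceAs (DecidableEq Unit)
  | n + 1 => @instDecidableEqSum _ _ (hIdxDecidableEq n) (hIdxDecidableEq n)

/-!
Write `A_{n+1}` as the block matrix `[[B, I], [I, -B]]` with `B² = n I`; squaring gives
`A_{n+1}² = (n + 1) I`. If `s² = n + 1`, the upper block row of `A_{n+1} (x, y) = s (x, y)` says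
`y = s x - B x`, and then the lower one holds automatically, because
`(s + B) (s - B) x = (s² - n) x = x`. Hence the eigenspace of `s` is the graph of `s - B`, and its
dimension is the size of `B`, for either choice of the square root `s`.
-/

lemma card_hIdx (n : ℕ) : Fintype.card (hIdx n) = 2 ^ n := by
  induction n with
  | zero => rfl
  | succ n ih =>
    calc Fintype.card (hIdx (n + 1)) = Fintype.card (hIdx n) + Fintype.card (hIdx n) :=
          Fintype.card_sum
      _ = 2 ^ (n + 1) := by rw [ih, pow_succ, mul_two]

lemma finrank_graph {R M N : Type*} [Semiring R] [AddCommMonoid M] [Module R M] [AddCommMonoid N]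
    [Module R N] (f : M →ₗ[R] N) : Module.finrank R f.graph = Module.finrank R M := by
  have hinj : Function.Injective (LinearMap.id.prod f) := fun _ _ h ↦ congrArg Prod.fst h
  rw [LinearMap.graph_eq_range_prod, LinearMap.finrank_range_of_inj hinj]

section SignedDouble

open Matrix

variable {ι R : Type*} [DecidableEq ι]

/-- The block matrix `[[B, I], [I, -B]]`, the step of Huang's recursion: if `B` is a signed
adjacency matrix of a graph `G`, this is one of the prism over `G`. -/
def signedDouble [Zero R] [One R] [Neg R] (B : Matrix ι ι R) : Matrix (ι ⊕ ι) (ι ⊕ ι) R :=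
  fromBlocks B 1 1 (-B)

lemma isSymm_signedDouble [Ring R] {B : Matrix ι ι R} (hB : B.IsSymm) :
    (signedDouble B).IsSymm :=
  hB.fromBlocks transpose_one hB.neg

variable [Fintype ι]

lemma trace_signedDouble [Ring R] (B : Matrix ι ι R) : (signedDouble B).trace = 0 := by
  simp [signedDouble, trace, Fintype.sum_sum_type]

lemma signedDouble_mul_self [Ring R] {B : Matrix ι ι R} {c : R} (hB : B * B = c • 1) :
    signedDouble B * signedDouble B = (c + 1) • 1 := by
  rw [signedDouble, fromBlocks_multiply, ← fromBlocks_one, fromBlocks_smul]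
  simp [hB, add_smul, add_comm]

variable [CommRing R] {B : Matrix ι ι R} {c s : R}

lemma mul_self_eq_of_mulVec_eq_smul [IsDomain R] (hB : B * B = c • 1) {μ : R} {v : ι → R}
    (hv : v ≠ 0) (hμ : B *ᵥ v = μ • v) : μ * μ = c := by
  refine smul_left_injective R hv ?_
  calc (μ * μ) • v = B *ᵥ (B *ᵥ v) := by rw [hμ, mulVec_smul, hμ, smul_smul]
    _ = c • v := by rw [mulVec_mulVec, hB, smul_mulVec, one_mulVec]

lemma signedDouble_mulVec_eq_smul_iff (hB : B * B = c • 1) (hs : s * s = c + 1)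
    (v : ι ⊕ ι → R) :
    signedDouble B *ᵥ v = s • v ↔
      v ∘ Sum.inr = s • (v ∘ Sum.inl) - B *ᵥ (v ∘ Sum.inl) := by
  obtain ⟨x, y, rfl⟩ : ∃ x y, v = Sum.elim x y := ⟨_, _, (Sum.elim_comp_inl_inr v).symm⟩
  have rows : signedDouble B *ᵥ Sum.elim x y = s • Sum.elim x y ↔
      B *ᵥ x + y = s • x ∧ x - B *ᵥ y = s • y := by
    simp [signedDouble, fromBlocks_mulVec, funext_iff, neg_mulVec, sub_eq_add_neg]
  have lower_of_upper (hy : y = s • x - B *ᵥ x) : x - B *ᵥ y = s • y := by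
    have hBB : B *ᵥ (B *ᵥ x) = c • x := by rw [mulVec_mulVec, hB, smul_mulVec, one_mulVec]
    rw [hy, mulVec_sub, mulVec_smul, hBB, smul_sub, smul_smul, hs]
    module
  rw [rows, Sum.elim_comp_inl, Sum.elim_comp_inr, eq_sub_iff_add_eq', and_iff_left_iff_imp]
  exact fun upper ↦ lower_of_upper (eq_sub_of_add_eq' upper)

lemma ker_signedDouble_sub_smul (hB : B * B = c • 1) (hs : s * s = c + 1) :
    LinearMap.ker ((signedDouble B).mulVecLin - s • LinearMap.id) =
      (s • LinearMap.id - B.mulVecLin).graph.comap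
        (LinearEquiv.sumArrowLequivProdArrow ι ι R R).toLinearMap := by
  ext v
  rw [LinearMap.mem_ker, LinearMap.sub_apply, sub_eq_zero]
  exact signedDouble_mulVec_eq_smul_iff hB hs v

lemma finrank_ker_signedDouble_sub_smul [Nontrivial R] (hB : B * B = c • 1)
    (hs : s * s = c + 1) :
    Module.finrank R (LinearMap.ker ((signedDouble B).mulVecLin - s • LinearMap.id)) =
      Fintype.card ι := by
  rw [ker_signedDouble_sub_smul hB hs, Submodule.comap_equiv_eq_map_symm,
    LinearEquiv.finrank_map_eq, finrank_graph, Module.finrank_fintype_fun_eq_card]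

lemma finrank_ker_signedDouble_add_smul [Nontrivial R] (hB : B * B = c • 1)
    (hs : s * s = c + 1) :
    Module.finrank R (LinearMap.ker ((signedDouble B).mulVecLin + s • LinearMap.id)) =
      Fintype.card ι := by
  have hneg : -s * -s = c + 1 := (neg_mul_neg s s).trans hs
  have hsub : (signedDouble B).mulVecLin + s • LinearMap.id =
      (signedDouble B).mulVecLin - (-s) • LinearMap.id := by module
  rw [hsub, finrank_ker_signedDouble_sub_smul hB hneg]

end SignedDouble

lemma exists_eq_signedDouble {R : Type*} [Ring R] {A : (n : ℕ) → Matrix (hIdx n) (hIdx n) R}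
    (hbase : A 1 = Matrix.fromBlocks 0 1 1 0)
    (hrec : ∀ n : ℕ, 1 ≤ n → A (n + 1) = Matrix.fromBlocks (A n) 1 1 (-(A n))) (n : ℕ) :
    ∃ B : Matrix (hIdx n) (hIdx n) R,
      A (n + 1) = signedDouble B ∧ B.IsSymm ∧ B * B = (n : R) • 1 := by
  induction n with
  | zero => exact ⟨0, by rw [hbase, signedDouble, neg_zero], Matrix.isSymm_zero, by simp⟩
  | succ n ih =>
    obtain ⟨B, hA, hsymm, hsq⟩ := ih
    refine ⟨A (n + 1), hrec (n + 1) n.succ_pos, ?_, ?_⟩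
    · rw [hA]
      exact isSymm_signedDouble hsymm
    · rw [hA, Nat.cast_succ]
      exact signedDouble_mul_self hsq

theorem huang_matrix_properties_general {R : Type*} [CommRing R] [IsDomain R]
    (A : (n : ℕ) → Matrix (hIdx n) (hIdx n) R)
    (hbase : A 1 = Matrix.fromBlocks 0 1 1 0)
    (hrec : ∀ n : ℕ, 1 ≤ n → A (n + 1) = Matrix.fromBlocks (A n) 1 1 (-(A n)))
    (n : ℕ) (hn : 1 ≤ n) :
    (A n).IsSymm ∧
    Matrix.trace (A n) = 0 ∧
    A n * A n = (n : R) • (1 : Matrix (hIdx n) (hIdx n) R) ∧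
    ∀ s : R, s * s = n →
      (∀ (μ : R) (v : hIdx n → R), v ≠ 0 → (A n).mulVec v = μ • v → μ = s ∨ μ = -s) ∧
      Module.finrank R (LinearMap.ker ((A n).mulVecLin - s • LinearMap.id)) = 2 ^ (n - 1) ∧
      Module.finrank R (LinearMap.ker ((A n).mulVecLin + s • LinearMap.id)) = 2 ^ (n - 1) := by
  obtain ⟨m, rfl⟩ := Nat.exists_eq_add_of_le' hn
  obtain ⟨B, hA, hsymm, hsq⟩ := exists_eq_signedDouble hbase hrec m
  rw [hA, Nat.cast_succ, Nat.add_sub_cancel, ← card_hIdx]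
  have hsq' := signedDouble_mul_self hsq
  refine ⟨isSymm_signedDouble hsymm, trace_signedDouble B, hsq', fun s hs ↦ ⟨?_, ?_, ?_⟩⟩
  · intro μ v hv hμ
    exact mul_self_eq_mul_self_iff.mp ((mul_self_eq_of_mulVec_eq_smul hsq' hv hμ).trans hs.symm)
  · exact finrank_ker_signedDouble_sub_smul hsq hs
  · exact finrank_ker_signedDouble_add_smul hsq hs

/-- Huang's matrices: if `A 1 = [[0,1],[1,0]]` and `A (n+1) = [[A n, I],[I, −A n]]`
for all `n ≥ 1`, then for every `n ≥ 1` the matrix `A n` is symmetric, has trace `0`,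
satisfies `(A n)² = n·I`, its only eigenvalues are `√n` and `−√n`, and each of the
two eigenspaces has dimension `2^(n−1)`. -/
theorem huang_matrix_properties
    (A : (n : ℕ) → Matrix (hIdx n) (hIdx n) ℝ)
    (hbase : A 1 = Matrix.fromBlocks 0 1 1 0)
    (hrec : ∀ n : ℕ, 1 ≤ n →
      A (n + 1) = Matrix.fromBlocks (A n) 1 1 (-(A n))) :
    ∀ n : ℕ, 1 ≤ n →
      (A n).IsSymm ∧
      Matrix.trace (A n) = 0 ∧
      (A n) * (A n) = (n : ℝ) • (1 : Matrix (hIdx n) (hIdx n) ℝ) ∧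
      (∀ (μ : ℝ) (v : hIdx n → ℝ), v ≠ 0 → (A n).mulVec v = μ • v →
        μ = Real.sqrt n ∨ μ = -Real.sqrt n) ∧
      Module.finrank ℝ
        (LinearMap.ker ((A n).mulVecLin - Real.sqrt n • LinearMap.id)) = 2 ^ (n - 1) ∧
      Module.finrank ℝ
        (LinearMap.ker ((A n).mulVecLin + Real.sqrt n • LinearMap.id)) = 2 ^ (n - 1) := by
  intro n hn
  obtain ⟨hsymm, htrace, hsq, hspec⟩ := huang_matrix_properties_general A hbase hrec n hn
  exact ⟨hsymm, htrace, hsq, hspec (Real.sqrt n) (Real.mul_self_sqrt n.cast_nonneg)⟩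
end
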